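/- Let n ≥ 4 and set I = Δ_n + J_n. Then I ∩ R_1 = 0, dim_ℂ(I ∩ R_2) = C(n+1,2) − 2, and m³ ⊆ I. Consequently the Hilbert function of R/I is (1, n, 2) (i.e. h_{R/I}(0)=1, h_{R/I}(1)=n, h_{R/I}(2)=2, and h_{R/I}(k)=0 for k ≥ 3) and dim_ℂ R/I = n + 3. -/

import Mathlib

open MvPolynomial

noncomputable section

/-- `R n = ℂ[x_1, …, x_n]`. -/
abbrev R (n : ℕ) : Type := MvPolynomial (Fin n) ℂ

/-- `m = (x_1, …, x_n)`, the ideal generated by the variables. -/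
def mId (n : ℕ) : Ideal (R n) := Ideal.span (Set.range MvPolynomial.X)

/-- `R_d`, the ℂ-subspace of homogeneous polynomials of degree `d`. -/
def Rdeg (n d : ℕ) : Submodule ℂ (R n) := homogeneousSubmodule (Fin n) ℂ d

/-- The Hilbert function `h_{R/I}(k) = dim_ℂ (m^k + I)/(m^{k+1} + I)`. -/
def hilbFn (n : ℕ) (I : Ideal (R n)) (k : ℕ) : ℕ :=
  Module.finrank ℂ
    (↥((mId n ^ k ⊔ I).restrictScalars ℂ) ⧸
      (Submodule.comap ((mId n ^ k ⊔ I).restrictScalars ℂ).subtype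
        ((mId n ^ (k + 1) ⊔ I).restrictScalars ℂ)))

/-- The cyclic predecessor on `Fin n`: `prev c` is `c - 1 mod n`. -/
def prev {n : ℕ} (c : Fin n) : Fin n := ⟨(c.val + (n - 1)) % n, Nat.mod_lt _ c.pos⟩

/-- `Δ_n`: the ideal generated by the 2×2 minors of the 2×n matrix with rows
`(x_1, x_2, …, x_n)` and `(x_n, x_1, …, x_{n-1})`. -/
def Delta (n : ℕ) : Ideal (R n) :=
  Ideal.span { f : R n | ∃ c d : Fin n, f = X c * X (prev d) - X d * X (prev c) }

/-- `J_n`: the ideal generated by the `n − 2` quadrics `x_n (x_i + x_{n−1})`, `i = 1, …, n−2`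
(in zero-indexed variables: `X (n-1) * (X i + X (n-2))` for `i` with `i + 2 < n`). -/
def Jn (n : ℕ) : Ideal (R n) :=
  Ideal.span { f : R n | ∃ (i : Fin n) (h : (i : ℕ) + 2 < n),
    f = X ⟨n - 1, by omega⟩ * (X i + X ⟨n - 2, by omega⟩) }

/-!
Index the variables by `ℤ/n`. The minors of `Δ_n` say that `x_a x_b` depends only on `a + b`, so
`x_a x_b = x_0 x_{a+b}` and `x_a x_b x_c = x_0² x_{a+b+c} =: Q (a + b + c)`. The quadrics of `J_n`
then say that `x_0 x_s = -x_0 x_{-3}` for `s ≠ -2, -3`; in degree two this leaves the classes of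
`x_0 x_{-2}` and `x_0 x_{-1}`, which a linear map depending only on index sums shows to be
independent. Multiplying by a third variable gives `Q s = -Q t` whenever `s ≠ t, t + 1`, hence
`Q s = -Q (s + 1) = Q (s + 2) = -Q s`, so `Q = 0`. Since the ideal is homogeneous, its `m`-adic
Hilbert function is computed degree by degree.
-/

section HomogeneousPolynomials

variable {σ K : Type*}

lemma homogeneousSubmodule_le_pow_idealOfVars [CommSemiring K] (d : ℕ) :
    homogeneousSubmodule σ K d ≤ (idealOfVars σ K ^ d).restrictScalars K := by
  intro p hp
  refine (mem_pow_idealOfVars_iff d p).2 fun x hx => ?_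
  exact (hp.degree_eq_sum_deg_support hx).le

lemma homogeneousComponent_eq_zero_of_mem_pow_idealOfVars [CommSemiring K]
    {p : MvPolynomial σ K} {d e : ℕ} (hp : p ∈ idealOfVars σ K ^ e) (hde : d < e) :
    homogeneousComponent d p = 0 :=
  homogeneousComponent_eq_zero' d p fun x hx =>
    (hde.trans_le ((mem_pow_idealOfVars_iff e p).1 hp x hx)).ne'

lemma sub_homogeneousComponent_mem_pow_idealOfVars [CommRing K]
    {p : MvPolynomial σ K} {d : ℕ} (hp : p ∈ idealOfVars σ K ^ d) :
    p - homogeneousComponent d p ∈ idealOfVars σ K ^ (d + 1) := by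
  rw [mem_pow_idealOfVars_iff'] at hp ⊢
  intro x hx
  rw [coeff_sub, coeff_homogeneousComponent]
  split_ifs with h
  · exact sub_self _
  · rw [hp x (by omega), sub_zero]

lemma restrictScalars_inf_homogeneousSubmodule_eq_bot [CommSemiring K]
    {I : Ideal (MvPolynomial σ K)} {d e : ℕ} (hI : I ≤ idealOfVars σ K ^ e) (hde : d < e) :
    I.restrictScalars K ⊓ homogeneousSubmodule σ K d = ⊥ := by
  rw [eq_bot_iff]
  rintro p ⟨hpI, hpd⟩
  rw [Submodule.mem_bot, ← homogeneousComponent_eq_self hpd]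
  exact homogeneousComponent_eq_zero_of_mem_pow_idealOfVars (hI hpI) hde

lemma homogeneousComponent_mul_of_isHomogeneous [CommSemiring K] {q : MvPolynomial σ K} {d : ℕ}
    (hq : q.IsHomogeneous d) (p : MvPolynomial σ K) :
    homogeneousComponent d (p * q) = coeff 0 p • q := by
  let := gradedAlgebra (σ := σ) (R := K)
  have h := DirectSum.coe_decompose_mul_of_right_mem_of_le (homogeneousSubmodule σ K)
    (a := p) hq le_rfl
  rw [Nat.sub_self] at h
  rw [smul_eq_C_mul, ← homogeneousComponent_zero, ← decomposition.decompose'_apply,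
    ← decomposition.decompose'_apply]
  exact h

lemma restrictScalars_span_inf_homogeneousSubmodule_le [CommSemiring K]
    {S : Set (MvPolynomial σ K)} {d : ℕ} (hS : S ⊆ homogeneousSubmodule σ K d) :
    (Ideal.span S).restrictScalars K ⊓ homogeneousSubmodule σ K d ≤ Submodule.span K S := by
  rintro f ⟨hfS, hfd⟩
  rw [← homogeneousComponent_eq_self hfd]
  clear hfd
  induction hfS using Submodule.closure_induction with
  | zero => simp
  | add p q _ _ hp hq => rw [map_add]; exact add_mem hp hq
  | smul_mem p q hq =>
    rw [smul_eq_mul, homogeneousComponent_mul_of_isHomogeneous (hS hq)]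
    exact Submodule.smul_mem _ _ (Submodule.subset_span hq)

lemma isHomogeneous_X_mul_X [CommSemiring K] (a b : σ) :
    (X a * X b : MvPolynomial σ K).IsHomogeneous 2 :=
  (isHomogeneous_X K a).mul (isHomogeneous_X K b)

lemma homogeneousSubmodule_two_eq_span [CommSemiring K] :
    homogeneousSubmodule σ K 2 =
      Submodule.span K (Set.range fun p : σ × σ => (X p.1 * X p.2 : MvPolynomial σ K)) := by
  rw [← homogeneousSubmodule_one_pow, homogeneousSubmodule_one_eq_span_X, pow_two,
    Submodule.span_mul_span]
  congr 1
  ext f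
  simp [Set.mem_mul]

lemma finrank_homogeneousSubmodule [CommRing K] [Nontrivial K] [Fintype σ] (d : ℕ) :
    Module.finrank K (homogeneousSubmodule σ K d) = (Fintype.card σ).multichoose d := by
  classical
  have hset : {x : σ →₀ ℕ | x.degree = d} =
      ((Finset.univ : Finset σ).finsuppAntidiag d : Set (σ →₀ ℕ)) := by
    ext x
    simp [Finset.mem_finsuppAntidiag, Finsupp.degree_eq_sum]
  rw [homogeneousSubmodule_eq_finsupp_supported, hset,
    (AddMonoidAlgebra.supportedEquivFinsupp (R := K) (S := K) _).finrank_eq,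
    Module.finrank_finsupp_self]
  simp [Finset.card_finsuppAntidiag_nat_eq_multichoose]

lemma finite_quotient_of_pow_idealOfVars_le [CommRing K] [Finite σ]
    {I : Ideal (MvPolynomial σ K)} {N : ℕ} (hI : idealOfVars σ K ^ N ≤ I) :
    Module.Finite K (MvPolynomial σ K ⧸ I) := by
  refine Module.Finite.of_surjective
    ((Ideal.Quotient.mkₐ K I).toLinearMap ∘ₗ (restrictTotalDegree σ K N).subtype) ?_
  rw [← LinearMap.range_eq_top, LinearMap.range_comp, Submodule.range_subtype, eq_top_iff]
  rintro x -
  obtain ⟨p, rfl⟩ := Ideal.Quotient.mk_surjective x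
  rw [p.as_sum, map_sum]
  refine sum_mem fun d _ => ?_
  rcases le_total d.degree N with hd | hd
  · refine Submodule.mem_map_of_mem ((mem_restrictTotalDegree _ _ _).2 ?_)
    exact (totalDegree_monomial_le _ _).trans hd
  · rw [Ideal.Quotient.eq_zero_iff_mem.2 (hI (Ideal.pow_le_pow_right hd ?_))]
    · exact zero_mem _
    · exact homogeneousSubmodule_le_pow_idealOfVars _ (isHomogeneous_monomial _ rfl)

end HomogeneousPolynomials

section Dimension

variable {K E V : Type*} [Field K] [AddCommGroup E] [Module K E] [AddCommGroup V] [Module K V]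

lemma finrank_inf_add_finrank_of_surjective (A B : Submodule K E) [Module.Finite K A]
    {g : A →ₗ[K] V} (hg : Function.Surjective g) (hker : LinearMap.ker g = B.comap A.subtype) :
    Module.finrank K ↥(B ⊓ A) + Module.finrank K V = Module.finrank K A := by
  rw [inf_comm, ← Submodule.map_comap_subtype, Submodule.finrank_map_subtype_eq, ← hker, add_comm,
    ← LinearMap.finrank_range_add_finrank_ker g, LinearMap.range_eq_top.2 hg, finrank_top]

lemma finrank_quotient_eq_add {A B : Submodule K E} (h : B ≤ A) [Module.Finite K (E ⧸ B)] :
    Module.finrank K (E ⧸ B) =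
      Module.finrank K (E ⧸ A) + Module.finrank K (A ⧸ B.comap A.subtype) := by
  have hker : LinearMap.ker (B.mkQ ∘ₗ A.subtype) = B.comap A.subtype := by
    rw [LinearMap.ker_comp, Submodule.ker_mkQ]
  rw [← Submodule.finrank_quotient_add_finrank (A.map B.mkQ),
    (Submodule.quotientQuotientEquivQuotient B A h).finrank_eq, ← hker,
    (LinearMap.quotKerEquivRange (B.mkQ ∘ₗ A.subtype)).finrank_eq, LinearMap.range_comp,
    Submodule.range_subtype]

end Dimension

section HilbertFunction

variable {n k N : ℕ} {I : Ideal (R n)}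

attribute [local instance] MvPolynomial.gradedAlgebra

instance finite_Rdeg (n d : ℕ) : Module.Finite ℂ (Rdeg n d) :=
  Module.Finite.iff_fg.2 (homogeneousSubmodule_fg (Fin n) ℂ d)

lemma hilbFn_eq_zero (h : mId n ^ k ≤ I) : hilbFn n I k = 0 := by
  have htop : Submodule.comap ((mId n ^ k ⊔ I).restrictScalars ℂ).subtype
      ((mId n ^ (k + 1) ⊔ I).restrictScalars ℂ) = ⊤ := by
    rw [Submodule.comap_subtype_eq_top]
    exact sup_le (h.trans le_sup_right) le_sup_right
  rw [hilbFn, htop]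
  exact Module.finrank_zero_of_subsingleton

lemma finrank_inf_Rdeg_add_hilbFn (hI : I.IsHomogeneous (homogeneousSubmodule (Fin n) ℂ)) (k : ℕ) :
    Module.finrank ℂ ↥(I.restrictScalars ℂ ⊓ Rdeg n k) + hilbFn n I k = n.multichoose k := by
  have hle : Rdeg n k ≤ (mId n ^ k ⊔ I).restrictScalars ℂ := fun p hp =>
    Ideal.mem_sup_left (homogeneousSubmodule_le_pow_idealOfVars k hp)
  let g := (Submodule.mkQ (Submodule.comap ((mId n ^ k ⊔ I).restrictScalars ℂ).subtype
    ((mId n ^ (k + 1) ⊔ I).restrictScalars ℂ))) ∘ₗ Submodule.inclusion hle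
  have hsurj : Function.Surjective g := by
    intro x
    obtain ⟨⟨f, hf⟩, rfl⟩ := Submodule.mkQ_surjective _ x
    obtain ⟨p, hp, q, hq, rfl⟩ := Submodule.mem_sup.1 hf
    refine ⟨⟨homogeneousComponent k p, homogeneousComponent_mem k p⟩, ?_⟩
    refine (Submodule.Quotient.eq _).2 ?_
    have hsub : p + q - homogeneousComponent k p ∈ mId n ^ (k + 1) ⊔ I := by
      rw [add_sub_right_comm]
      exact Submodule.add_mem_sup (sub_homogeneousComponent_mem_pow_idealOfVars hp) hq
    rw [← neg_sub] at hsub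
    exact neg_mem_iff.1 hsub
  have hker : LinearMap.ker g = (I.restrictScalars ℂ).comap (Rdeg n k).subtype := by
    ext ⟨f, hf⟩
    rw [LinearMap.ker_comp, Submodule.ker_mkQ]
    refine ⟨fun h => ?_, fun h => Ideal.mem_sup_right h⟩
    obtain ⟨p, hp, q, hq, hpq : p + q = f⟩ := Submodule.mem_sup.1 h
    have hfq : f = homogeneousComponent k q := by
      rw [← homogeneousComponent_eq_self hf, ← hpq, map_add,
        homogeneousComponent_eq_zero_of_mem_pow_idealOfVars hp k.lt_succ_self, zero_add]
    change f ∈ I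
    exact hfq ▸ homogeneousComponent_mem_of_mem hI hq k
  rw [hilbFn, finrank_inf_add_finrank_of_surjective _ _ hsurj hker]
  exact (finrank_homogeneousSubmodule k).trans (by rw [Fintype.card_fin])

lemma hilbFn_eq_multichoose (hI : I.IsHomogeneous (homogeneousSubmodule (Fin n) ℂ))
    (hle : I ≤ mId n ^ N) (hk : k < N) : hilbFn n I k = n.multichoose k := by
  rw [← finrank_inf_Rdeg_add_hilbFn hI, Rdeg,
    restrictScalars_inf_homogeneousSubmodule_eq_bot hle hk, finrank_bot, zero_add]

lemma finrank_quotient_pow_sup_eq_sum_hilbFn (I : Ideal (R n)) (N : ℕ) :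
    Module.finrank ℂ (R n ⧸ (mId n ^ N ⊔ I)) = ∑ k ∈ Finset.range N, hilbFn n I k := by
  induction N with
  | zero =>
    rw [pow_zero, Ideal.one_eq_top, top_sup_eq, Finset.range_zero, Finset.sum_empty]
    exact Module.finrank_zero_of_subsingleton
  | succ N ih =>
    have hfin : Module.Finite ℂ (R n ⧸ (mId n ^ (N + 1) ⊔ I)) :=
      finite_quotient_of_pow_idealOfVars_le le_sup_left
    have hequiv (J : Ideal (R n)) := Submodule.Quotient.restrictScalarsEquiv ℂ J
    have : Module.Finite ℂ (R n ⧸ (mId n ^ (N + 1) ⊔ I).restrictScalars ℂ) :=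
      Module.Finite.equiv (hequiv _).symm
    have hle : (mId n ^ (N + 1) ⊔ I).restrictScalars ℂ ≤ (mId n ^ N ⊔ I).restrictScalars ℂ :=
      sup_le_sup_right (Ideal.pow_le_pow_right N.le_succ) I
    rw [Finset.sum_range_succ, ← ih, hilbFn, ← (hequiv _).finrank_eq,
      finrank_quotient_eq_add hle, (hequiv _).finrank_eq]

lemma finrank_quotient_eq_sum_hilbFn (h : mId n ^ N ≤ I) :
    Module.finrank ℂ (R n ⧸ I) = ∑ k ∈ Finset.range N, hilbFn n I k := by
  rw [← finrank_quotient_pow_sup_eq_sum_hilbFn, sup_eq_right.2 h]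

end HilbertFunction

section CyclicIndices

variable {n : ℕ} [NeZero n]

lemma prev_eq_sub_one (c : Fin n) : prev c = c - 1 := by
  have hn : 0 < n := c.pos
  ext
  rcases Nat.lt_or_ge 1 n with h | h
  · simp [prev, Fin.val_sub, Nat.mod_eq_of_lt h, add_comm]
  · omega

lemma fin_one_ne_zero (hn : 1 < n) : (1 : Fin n) ≠ 0 := by
  simp [Fin.ext_iff, Nat.mod_eq_of_lt hn]

lemma fin_two_ne_zero (hn : 2 < n) : (2 : Fin n) ≠ 0 := by
  simp [Fin.ext_iff, Nat.mod_eq_of_lt hn]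

open Fin.CommRing

lemma neg_one_ne_neg_two (hn : 1 < n) : (-1 : Fin n) ≠ -2 :=
  fun h => fin_one_ne_zero hn (by linear_combination h)

lemma neg_one_ne_neg_three (hn : 2 < n) : (-1 : Fin n) ≠ -3 :=
  fun h => fin_two_ne_zero hn (by linear_combination h)

lemma neg_three_ne_neg_two (hn : 1 < n) : (-3 : Fin n) ≠ -2 :=
  fun h => fin_one_ne_zero hn (by linear_combination -h)

lemma mk_sub_eq_neg {k : ℕ} (hk : k ≤ n) (h : n - k < n) : (⟨n - k, h⟩ : Fin n) = -(k : Fin n) := by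
  rw [← Fin.cast_val_eq_self (⟨n - k, h⟩ : Fin n), Nat.cast_sub hk, Fin.natCast_self, zero_sub]

lemma mk_sub_one_eq_neg_one (h : n - 1 < n) : (⟨n - 1, h⟩ : Fin n) = -1 := by
  simpa using mk_sub_eq_neg (by omega) h

lemma mk_sub_two_eq_neg_two (hn : 2 ≤ n) (h : n - 2 < n) : (⟨n - 2, h⟩ : Fin n) = -2 := by
  simpa using mk_sub_eq_neg hn h

lemma val_add_two_lt_iff (hn : 2 ≤ n) (a : Fin n) : (a : ℕ) + 2 < n ↔ a ≠ -1 ∧ a ≠ -2 := by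
  rw [← mk_sub_one_eq_neg_one (by omega), ← mk_sub_two_eq_neg_two hn (by omega), Ne, Ne,
    Fin.ext_iff, Fin.ext_iff]
  dsimp only
  omega

end CyclicIndices

section Relations

open Fin.CommRing

variable {n : ℕ} [NeZero n] {A : Type*} [CommRing A] {y : Fin n → A}

/-- The relations that `Δ_n + J_n` imposes on the classes of the variables, for a family in any
commutative ring. Indices are added in `Fin n ≃ ℤ/n`, so that `y (-1)` and `y (-2)` are the classes
of the last two variables. -/
structure SatisfiesRelations (y : Fin n → A) : Prop where
  minor (a b : Fin n) : y a * y (b - 1) = y b * y (a - 1)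
  quadric {a : Fin n} (h₁ : a ≠ -1) (h₂ : a ≠ -2) : y (-1) * (y a + y (-2)) = 0

namespace SatisfiesRelations

lemma mul_eq (hy : SatisfiesRelations y) (a b : Fin n) : y a * y b = y 0 * y (a + b) := by
  obtain ⟨k, rfl⟩ : ∃ k : ℕ, (k : Fin n) = a := ⟨a, Fin.cast_val_eq_self a⟩
  induction k generalizing b with
  | zero => simp
  | succ k ih =>
    calc y (k + 1 : ℕ) * y b = y (k + 1 : ℕ) * y (b + 1 - 1) := by rw [add_sub_cancel_right]
      _ = y k * y (b + 1) := by rw [hy.minor, mul_comm]; simp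
      _ = y 0 * y ((k + 1 : ℕ) + b) := by rw [ih]; push_cast; ring_nf

lemma mul_mul_eq (hy : SatisfiesRelations y) (a b c : Fin n) :
    y a * y b * y c = y 0 * y 0 * y (a + b + c) := by
  rw [hy.mul_eq a b, mul_assoc, hy.mul_eq (a + b) c, mul_assoc]

lemma zero_mul_eq_neg (hy : SatisfiesRelations y) {s : Fin n} (h₂ : s ≠ -2) (h₃ : s ≠ -3) :
    y 0 * y s = -(y 0 * y (-3)) := by
  have h : y (-1) * (y (s + 1) + y (-2)) = 0 :=
    hy.quadric (fun h => h₂ (by linear_combination h)) (fun h => h₃ (by linear_combination h))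
  have hleft : -1 + (s + 1) = s := by ring
  have hright : (-1 + -2 : Fin n) = -3 := by ring
  rw [mul_add, hy.mul_eq (-1), hleft, hy.mul_eq (-1), hright] at h
  exact eq_neg_of_add_eq_zero_left h

lemma zero_mul_zero_mul_eq_neg (hy : SatisfiesRelations y) {s t : Fin n} (h₀ : s ≠ t)
    (h₁ : s ≠ t + 1) :
    y 0 * y 0 * y s = -(y 0 * y 0 * y t) := by
  have h := hy.zero_mul_eq_neg (s := s - t - 3) (fun h => h₁ (by linear_combination h))
    (fun h => h₀ (by linear_combination h))
  calc y 0 * y 0 * y s = y 0 * y (s - t - 3) * y (t + 3) := by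
        rw [hy.mul_mul_eq 0 (s - t - 3)]
        congr 2
        ring
    _ = -(y 0 * y (-3) * y (t + 3)) := by rw [h, neg_mul]
    _ = -(y 0 * y 0 * y t) := by
        rw [hy.mul_mul_eq 0 (-3)]
        congr 3
        ring

lemma two_mul_mul_mul_eq_zero (hy : SatisfiesRelations y) (hn : 2 < n) (a b c : Fin n) :
    2 * (y a * y b * y c) = 0 := by
  have hone := fin_one_ne_zero (one_lt_two.trans hn)
  have htwo := fin_two_ne_zero hn
  have hstep (s : Fin n) : y 0 * y 0 * y s = -(y 0 * y 0 * y (s + 1)) :=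
    hy.zero_mul_zero_mul_eq_neg (fun h => hone (by linear_combination -h))
      (fun h => htwo (by linear_combination -h))
  have hback (s : Fin n) : y 0 * y 0 * y (s + 1 + 1) = -(y 0 * y 0 * y s) :=
    hy.zero_mul_zero_mul_eq_neg (fun h => htwo (by linear_combination h))
      (fun h => hone (by linear_combination h))
  rw [hy.mul_mul_eq]
  linear_combination hstep (a + b + c) - hstep (a + b + c + 1) + hback (a + b + c)

end SatisfiesRelations

end Relations

section RelationIdeal

open Fin.CommRing

variable {n : ℕ} [NeZero n]

/-- The generators of `Δ_n + J_n`, with the cyclic predecessor written as subtraction of `1` and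
the indices of the last two variables as `-1` and `-2`. -/
def relations (n : ℕ) [NeZero n] : Set (R n) :=
  {f | ∃ a b : Fin n, f = X a * X (b - 1) - X b * X (a - 1)} ∪
    {f | ∃ a : Fin n, a ≠ -1 ∧ a ≠ -2 ∧ f = X (-1) * (X a + X (-2))}

lemma Delta_sup_Jn_eq_span_relations (hn : 2 ≤ n) :
    Delta n ⊔ Jn n = Ideal.span (relations n) := by
  rw [relations, Ideal.span_union, Delta, Jn]
  simp only [prev_eq_sub_one, mk_sub_one_eq_neg_one, mk_sub_two_eq_neg_two hn,
    val_add_two_lt_iff hn, exists_prop, and_assoc]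

lemma relations_subset_homogeneousSubmodule :
    relations n ⊆ homogeneousSubmodule (Fin n) ℂ 2 := by
  rintro f (⟨a, b, rfl⟩ | ⟨a, -, -, rfl⟩)
  · exact sub_mem (isHomogeneous_X_mul_X _ _) (isHomogeneous_X_mul_X _ _)
  · rw [mul_add]
    exact add_mem (isHomogeneous_X_mul_X _ _) (isHomogeneous_X_mul_X _ _)

attribute [local instance] MvPolynomial.gradedAlgebra in
lemma isHomogeneous_span_relations :
    (Ideal.span (relations n)).IsHomogeneous (homogeneousSubmodule (Fin n) ℂ) :=
  Ideal.homogeneous_span _ _ fun _ hf => ⟨2, relations_subset_homogeneousSubmodule hf⟩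

lemma span_relations_le_mId_pow_two : Ideal.span (relations n) ≤ mId n ^ 2 :=
  Ideal.span_le.2 fun _ hf =>
    homogeneousSubmodule_le_pow_idealOfVars 2 (relations_subset_homogeneousSubmodule hf)

lemma satisfiesRelations_mk_X :
    SatisfiesRelations fun i => Ideal.Quotient.mk (Ideal.span (relations n)) (X i) where
  minor a b := by
    rw [← map_mul, ← map_mul, Ideal.Quotient.eq]
    exact Ideal.subset_span (.inl ⟨a, b, rfl⟩)
  quadric {a} h₁ h₂ := by
    rw [← map_add, ← map_mul, Ideal.Quotient.eq_zero_iff_mem]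
    exact Ideal.subset_span (.inr ⟨a, h₁, h₂, rfl⟩)

lemma mId_pow_three_le_span_relations (hn : 2 < n) : mId n ^ 3 ≤ Ideal.span (relations n) := by
  rw [mId, pow_three', Ideal.span_mul_span', Ideal.span_mul_span', Ideal.span_le]
  rintro _ ⟨_, ⟨_, ⟨a, rfl⟩, _, ⟨b, rfl⟩, rfl⟩, _, ⟨c, rfl⟩, rfl⟩
  have h := satisfiesRelations_mk_X.two_mul_mul_mul_eq_zero hn a b c
  rw [← map_mul, ← map_mul, two_mul, ← two_smul ℂ, smul_eq_zero] at h
  exact Ideal.Quotient.eq_zero_iff_mem.1 (h.resolve_left two_ne_zero)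

end RelationIdeal

section NormalForm

open Fin.CommRing

variable {n : ℕ} [NeZero n]

/-- Modulo the relations a product of two variables whose indices add up to `s` is a combination of
`X 0 * X (-2)` and `X 0 * X (-1)`; these are its two coefficients. -/
def normalFormCoeffs (s : Fin n) : ℂ × ℂ :=
  if s = -2 then (1, 0) else if s = -3 then (0, -1) else (0, 1)

lemma normalFormCoeffs_neg_two : normalFormCoeffs (-2 : Fin n) = (1, 0) := if_pos rfl

lemma normalFormCoeffs_neg_three (hn : 1 < n) : normalFormCoeffs (-3 : Fin n) = (0, -1) := by
  rw [normalFormCoeffs, if_neg (neg_three_ne_neg_two hn), if_pos rfl]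

lemma normalFormCoeffs_of_ne {s : Fin n} (h₂ : s ≠ -2) (h₃ : s ≠ -3) :
    normalFormCoeffs s = (0, 1) := by
  rw [normalFormCoeffs, if_neg h₂, if_neg h₃]

lemma SatisfiesRelations.mul_eq_smul_add_smul {A : Type*} [CommRing A] [Algebra ℂ A] {y : Fin n → A}
    (hy : SatisfiesRelations y) (hn : 2 < n) (a b : Fin n) :
    y a * y b = (normalFormCoeffs (a + b)).1 • (y 0 * y (-2)) +
      (normalFormCoeffs (a + b)).2 • (y 0 * y (-1)) := by
  have hone := hy.zero_mul_eq_neg (neg_one_ne_neg_two (one_lt_two.trans hn))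
    (neg_one_ne_neg_three hn)
  rw [hy.mul_eq]
  by_cases h₂ : a + b = -2
  · simp [h₂, normalFormCoeffs_neg_two]
  by_cases h₃ : a + b = -3
  · simp [h₃, normalFormCoeffs_neg_three (one_lt_two.trans hn), hone]
  · simp [normalFormCoeffs_of_ne h₂ h₃, hy.zero_mul_eq_neg h₂ h₃, hone]

/-- The linear map sending a monomial with index sum `s` (multiplicities counted, in `ℤ/n`)
to `normalFormCoeffs s`. On quadrics it gives the coordinates modulo `Δ_n + J_n`. -/
def normalForm (n : ℕ) [NeZero n] : R n →ₗ[ℂ] ℂ × ℂ :=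
  (basisMonomials (Fin n) ℂ).constr ℂ fun d =>
    normalFormCoeffs (Finsupp.weight (fun i : Fin n => i) d)

lemma normalForm_X_mul_X (a b : Fin n) :
    normalForm n (X a * X b) = normalFormCoeffs (a + b) := by
  have hmon : (X a * X b : R n) =
      basisMonomials (Fin n) ℂ (Finsupp.single a 1 + Finsupp.single b 1) := by
    simp [X, monomial_mul]
  rw [hmon, normalForm, Module.Basis.constr_basis, map_add, Finsupp.weight_single,
    Finsupp.weight_single, one_smul, one_smul]

lemma span_relations_inf_Rdeg_two_le_ker_normalForm (hn : 1 < n) :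
    (Ideal.span (relations n)).restrictScalars ℂ ⊓ Rdeg n 2 ≤ LinearMap.ker (normalForm n) := by
  refine (restrictScalars_span_inf_homogeneousSubmodule_le
    relations_subset_homogeneousSubmodule).trans (Submodule.span_le.2 ?_)
  rintro f (⟨a, b, rfl⟩ | ⟨a, h₁, h₂, rfl⟩) <;> rw [SetLike.mem_coe, LinearMap.mem_ker]
  · rw [map_sub, normalForm_X_mul_X, normalForm_X_mul_X, sub_eq_zero]
    congr 1
    ring
  · have hsum : (-1 + -2 : Fin n) = -3 := by ring
    have h₂' : -1 + a ≠ -2 := fun h => h₁ (by linear_combination h)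
    have h₃' : -1 + a ≠ -3 := fun h => h₂ (by linear_combination h)
    rw [mul_add, map_add, normalForm_X_mul_X, normalForm_X_mul_X, hsum,
      normalFormCoeffs_of_ne h₂' h₃', normalFormCoeffs_neg_three hn]
    simp

lemma mk_eq_normalForm_smul (hn : 2 < n) {f : R n} (hf : f ∈ Rdeg n 2) :
    Ideal.Quotient.mk (Ideal.span (relations n)) f =
      (normalForm n f).1 • Ideal.Quotient.mk _ (X 0 * X (-2)) +
        (normalForm n f).2 • Ideal.Quotient.mk _ (X 0 * X (-1)) := by
  rw [Rdeg, homogeneousSubmodule_two_eq_span] at hf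
  induction hf using Submodule.span_induction with
  | zero => simp
  | mem p hp =>
    obtain ⟨⟨a, b⟩, rfl⟩ := hp
    rw [normalForm_X_mul_X]
    exact satisfiesRelations_mk_X.mul_eq_smul_add_smul hn a b
  | add p q _ _ hp hq =>
    simp only [map_add, hp, hq, Prod.fst_add, Prod.snd_add, add_smul]
    ring
  | smul c p _ hp =>
    rw [← Ideal.Quotient.mkₐ_eq_mk ℂ, map_smul, Ideal.Quotient.mkₐ_eq_mk, hp, smul_add, smul_smul,
      smul_smul, map_smul, Prod.smul_fst, Prod.smul_snd, smul_eq_mul, smul_eq_mul]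

lemma normalForm_domRestrict_surjective (hn : 2 < n) :
    Function.Surjective ((normalForm n).domRestrict (Rdeg n 2)) := by
  rintro ⟨c, d⟩
  refine ⟨c • ⟨_, isHomogeneous_X_mul_X 0 (-2)⟩ + d • ⟨_, isHomogeneous_X_mul_X 0 (-1)⟩, ?_⟩
  simp [normalForm_X_mul_X, normalFormCoeffs_neg_two,
    normalFormCoeffs_of_ne (neg_one_ne_neg_two (one_lt_two.trans hn)) (neg_one_ne_neg_three hn)]

lemma finrank_span_relations_inf_Rdeg_two (hn : 2 < n) :
    Module.finrank ℂ ↥((Ideal.span (relations n)).restrictScalars ℂ ⊓ Rdeg n 2) + 2 =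
      Nat.choose (n + 1) 2 := by
  have hker : LinearMap.ker ((normalForm n).domRestrict (Rdeg n 2)) =
      ((Ideal.span (relations n)).restrictScalars ℂ).comap (Rdeg n 2).subtype := by
    ext ⟨f, hf⟩
    rw [LinearMap.mem_ker, LinearMap.domRestrict_apply]
    refine ⟨fun h => ?_, fun h =>
      span_relations_inf_Rdeg_two_le_ker_normalForm (one_lt_two.trans hn) ⟨h, hf⟩⟩
    have hmk := mk_eq_normalForm_smul hn hf
    rw [h] at hmk
    exact Ideal.Quotient.eq_zero_iff_mem.1 (by simpa using hmk)
  have h := finrank_inf_add_finrank_of_surjective _ _ (normalForm_domRestrict_surjective hn) hker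
  rw [Module.finrank_prod, Module.finrank_self] at h
  rw [h, Rdeg, finrank_homogeneousSubmodule, Fintype.card_fin, Nat.multichoose_eq]
  rfl

end NormalForm

theorem delta_plus_J_hilbert_function_general (n : ℕ) (hn : 3 ≤ n) :
    (Delta n ⊔ Jn n).restrictScalars ℂ ⊓ Rdeg n 1 = ⊥ ∧
    Module.finrank ℂ ↥((Delta n ⊔ Jn n).restrictScalars ℂ ⊓ Rdeg n 2)
      = Nat.choose (n + 1) 2 - 2 ∧
    mId n ^ 3 ≤ Delta n ⊔ Jn n ∧
    hilbFn n (Delta n ⊔ Jn n) 0 = 1 ∧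
    hilbFn n (Delta n ⊔ Jn n) 1 = n ∧
    hilbFn n (Delta n ⊔ Jn n) 2 = 2 ∧
    (∀ k : ℕ, 3 ≤ k → hilbFn n (Delta n ⊔ Jn n) k = 0) ∧
    Module.finrank ℂ (R n ⧸ (Delta n ⊔ Jn n)) = n + 3 := by
  have : NeZero n := ⟨by omega⟩
  rw [Delta_sup_Jn_eq_span_relations (by omega)]
  have hle := span_relations_le_mId_pow_two (n := n)
  have hhom := isHomogeneous_span_relations (n := n)
  have hcube := mId_pow_three_le_span_relations hn
  have hquad := finrank_span_relations_inf_Rdeg_two hn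
  have h₀ : hilbFn n (Ideal.span (relations n)) 0 = 1 := by
    rw [hilbFn_eq_multichoose hhom hle two_pos, Nat.multichoose_zero_right]
  have h₁ : hilbFn n (Ideal.span (relations n)) 1 = n := by
    rw [hilbFn_eq_multichoose hhom hle one_lt_two, Nat.multichoose_one_right]
  have h₂ : hilbFn n (Ideal.span (relations n)) 2 = 2 := by
    have hdim := finrank_inf_Rdeg_add_hilbFn hhom 2
    have hchoose : n.multichoose 2 = (n + 1).choose 2 := Nat.multichoose_eq n 2
    omega
  refine ⟨restrictScalars_inf_homogeneousSubmodule_eq_bot hle one_lt_two, by omega, hcube, h₀, h₁,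
    h₂, fun k hk => hilbFn_eq_zero ((Ideal.pow_le_pow_right hk).trans hcube), ?_⟩
  rw [finrank_quotient_eq_sum_hilbFn hcube, Finset.sum_range_succ, Finset.sum_range_succ,
    Finset.sum_range_one, h₀, h₁, h₂]
  ring

/-- For `n ≥ 4` and `I = Δ_n + J_n`: `I ∩ R_1 = 0`,
`dim_ℂ (I ∩ R_2) = C(n+1, 2) − 2`, `m³ ⊆ I`, the Hilbert function of `R/I` is `(1, n, 2)`,
and `dim_ℂ R/I = n + 3`. -/
theorem delta_plus_J_hilbert_function (n : ℕ) (hn : 4 ≤ n) :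
    (Delta n ⊔ Jn n).restrictScalars ℂ ⊓ Rdeg n 1 = ⊥ ∧
    Module.finrank ℂ ↥((Delta n ⊔ Jn n).restrictScalars ℂ ⊓ Rdeg n 2)
      = Nat.choose (n + 1) 2 - 2 ∧
    mId n ^ 3 ≤ Delta n ⊔ Jn n ∧
    hilbFn n (Delta n ⊔ Jn n) 0 = 1 ∧
    hilbFn n (Delta n ⊔ Jn n) 1 = n ∧
    hilbFn n (Delta n ⊔ Jn n) 2 = 2 ∧
    (∀ k : ℕ, 3 ≤ k → hilbFn n (Delta n ⊔ Jn n) k = 0) ∧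
    Module.finrank ℂ (R n ⧸ (Delta n ⊔ Jn n)) = n + 3 :=
  delta_plus_J_hilbert_function_general n (by omega)

end
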